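/- arXiv:1707.00653 — 2 statements merged into one kernel-verified Lean document; each statement's English description precedes it below -/
import Mathlib

section
/- Let f = x⁶ + y⁴ + z³ − u² + tv and g = x⁷ + z²u + xu² + zt² + v² in ℂ[x, y, z, t, u, v]. Then at every point p ∈ ℂ⁶ with p ≠ 0 and f(p) = g(p) = 0, the 2×6 Jacobian matrix of (f, g) evaluated at p has rank 2. (Hence X_{12,14} : (f = g = 0) ⊂ ℙ(2,3,4,5,6,7) is quasismooth.) -/
/-!
If the Jacobian matrix drops rank at `p`, then either `∇g = 0` or `∇f = l • ∇g` for some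
multiplier `l`. The gradient of `g` vanishes only along the `y`-axis, where `f = y⁴`. In the second
case `y = 0` because `g` does not involve `y`, and since `l` has weight `-2` the torus action
reduces to `l = 0`, where `∇f = 0` forces `p = 0`, or `l = 1`. For `l = 1` the `t`- and
`v`-equations give `t = 4zt`, so `t = 0` or `z = 1/4`. When `z = 1/4`, eliminating `u` leaves a
cubic and a sextic in `2x` without a common root; when `t = 0 ≠ z`, the same elimination leaves a
quadratic whose roots are irrational together with a linear equation over `ℚ`.
-/

open MvPolynomial

/-- `f = x⁶ + y⁴ + z³ − u² + tv` in coordinates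
`x = X 0, y = X 1, z = X 2, t = X 3, u = X 4, v = X 5`. -/
noncomputable def f37 : MvPolynomial (Fin 6) ℂ :=
  X 0 ^ 6 + X 1 ^ 4 + X 2 ^ 3 - X 4 ^ 2 + X 3 * X 5

/-- `g = x⁷ + z²u + xu² + zt² + v²`. -/
noncomputable def g37 : MvPolynomial (Fin 6) ℂ :=
  X 0 ^ 7 + X 2 ^ 2 * X 4 + X 0 * X 4 ^ 2 + X 2 * X 3 ^ 2 + X 5 ^ 2

/-- The gradient of a polynomial at a point, as a row of the Jacobian matrix. -/
noncomputable def gradientAt {σ R : Type*} [CommSemiring R] (F : MvPolynomial σ R) (p : σ → R) :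
    σ → R :=
  fun j => eval p (pderiv j F)

theorem rank_jacobian_eq_two {σ K : Type*} [Fintype σ] [Field K] {F G : MvPolynomial σ K}
    {p : σ → K} (hG : gradientAt G p ≠ 0) (hFG : ∀ l : K, l • gradientAt G p ≠ gradientAt F p) :
    (Matrix.of fun (i : Fin 2) (j : σ) => eval p (pderiv j (![F, G] i))).rank = 2 :=
  (LinearIndependent.rank_matrix (linearIndependent_fin2.mpr ⟨hG, hFG⟩)).trans (Fintype.card_fin 2)

theorem cubic_ne_zero_of_sextic_eq_zero {K : Type*} [Field K] [CharZero K] {x : K}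
    (hx : 4 * x ^ 6 + 7 * x + 17 = 0) : 7 * x ^ 3 + 17 * x ^ 2 - 20 * x - 51 ≠ 0 := by
  intro hcubic
  -- Bézout coefficients from the extended Euclidean algorithm.
  have hbezout : (12472381789 : K) = 0 := by
    linear_combination
      (-28837529 * x ^ 2 + 2027032 * x + 176727032) * hx
        + (16478588 * x ^ 5 - 41177732 * x ^ 4 + 46097868 * x ^ 3 - 109544344 * x ^ 2
          + 97735268 * x - 185647495) * hcubic
  norm_num at hbezout

/-- The Lagrange multiplier equations `∇f37 = l • ∇g37` together with `f37 = 0`, at a point with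
`y = 0`. -/
structure IsLagrangePoint {R : Type*} [CommRing R] (l x z t u v : R) : Prop where
  f_eq : x ^ 6 + z ^ 3 - u ^ 2 + t * v = 0
  dx_eq : 6 * x ^ 5 = l * (7 * x ^ 6 + u ^ 2)
  dz_eq : 3 * z ^ 2 = l * (2 * z * u + t ^ 2)
  dt_eq : v = l * (2 * z * t)
  du_eq : -2 * u = l * (z ^ 2 + 2 * x * u)
  dv_eq : t = l * (2 * v)

namespace IsLagrangePoint

theorem rescale {R : Type*} [CommRing R] {l x z t u v : R} (s : R)
    (h : IsLagrangePoint (s ^ 2 * l) x z t u v) :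
    IsLagrangePoint l (s ^ 2 * x) (s ^ 4 * z) (s ^ 5 * t) (s ^ 6 * u) (s ^ 7 * v) where
  f_eq := by linear_combination s ^ 12 * h.f_eq
  dx_eq := by linear_combination s ^ 10 * h.dx_eq
  dz_eq := by linear_combination s ^ 8 * h.dz_eq
  dt_eq := by linear_combination s ^ 7 * h.dt_eq
  du_eq := by linear_combination s ^ 6 * h.du_eq
  dv_eq := by linear_combination s ^ 5 * h.dv_eq

variable {K : Type*} [Field K] [CharZero K] {l x z t u v : K}

theorem eq_zero_of_multiplier_eq_zero (h : IsLagrangePoint 0 x z t u v) :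
    x = 0 ∧ z = 0 ∧ t = 0 ∧ u = 0 ∧ v = 0 :=
  ⟨by simpa using h.dx_eq, by simpa using h.dz_eq, by simpa using h.dv_eq,
    by simpa using h.du_eq, by simpa using h.dt_eq⟩

theorem z_ne_one_fourth (h : IsLagrangePoint 1 x z t u v) : z ≠ 1 / 4 := by
  rintro rfl
  have hu : 32 * u * (1 + x) = -1 := by linear_combination -16 * h.du_eq
  have ht : t ^ 2 = 3 / 16 - u / 2 := by linear_combination -h.dz_eq
  have hf : 1024 * x ^ 6 = 1024 * u ^ 2 + 256 * u - 112 := by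
    linear_combination 1024 * h.f_eq - 1024 * t * h.dt_eq - 512 * ht
  have hquadratic : 1024 * u ^ 2 + 256 * u = 44 - 56 * x := by
    linear_combination (1024 * x * h.dx_eq - (6 - 7 * x) * hf + (256 * u + 56) * hu) / 14
  have hsextic : 4 * (2 * x) ^ 6 + 7 * (2 * x) + 17 = 0 := by
    linear_combination (hf + hquadratic) / 4
  have hu_eq : 32 * u = 56 * x ^ 2 + 12 * x - 52 := by
    linear_combination (32 * u + 8) * hu - (1 + x) * hquadratic
  have hcubic : 7 * (2 * x) ^ 3 + 17 * (2 * x) ^ 2 - 20 * (2 * x) - 51 = 0 := by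
    linear_combination hu - (1 + x) * hu_eq
  exact cubic_ne_zero_of_sextic_eq_zero hsextic hcubic

theorem t_eq_zero (h : IsLagrangePoint 1 x z t u v) : t = 0 := by
  have htz : t * (z - 1 / 4) = 0 := by linear_combination -h.dv_eq / 4 - h.dt_eq / 2
  exact (mul_eq_zero.mp htz).resolve_right (sub_ne_zero.mpr h.z_ne_one_fourth)

theorem z_eq_zero (h : IsLagrangePoint 1 x z t u v) : z = 0 := by
  obtain rfl := h.t_eq_zero
  by_contra hz
  have hu : u = 3 / 2 * z := mul_left_cancel₀ hz (by linear_combination -h.dz_eq / 2)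
  subst hu
  obtain rfl : z = -3 * (1 + x) := mul_left_cancel₀ hz (by linear_combination -h.du_eq)
  have hw : 1 + x ≠ 0 := right_ne_zero_of_mul hz
  have hsextic : 4 * x ^ 6 = 27 * (4 * x + 7) * (1 + x) ^ 2 := by
    linear_combination 4 * h.f_eq
  have hquintic : 2 * x ^ 5 = 9 * (7 * x + 13) * (1 + x) ^ 2 := by
    linear_combination h.dx_eq / 3 + 7 / 3 * h.f_eq
  have hquadratic : 2 * x ^ 2 + 2 * x - 3 = 0 :=
    mul_left_cancel₀ (pow_ne_zero 2 hw)
      (by linear_combination (hsextic - 2 * x * hquintic) / 63)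
  have hx : x = -57 / 28 := by
    linear_combination ((x ^ 3 - x ^ 2 - 29 * x - 94) * hquadratic - hquintic) / 196
  norm_num [hx] at hquadratic

theorem eq_zero_of_multiplier_eq_one (h : IsLagrangePoint 1 x z t u v) :
    x = 0 ∧ z = 0 ∧ t = 0 ∧ u = 0 ∧ v = 0 := by
  obtain rfl := h.t_eq_zero
  obtain rfl := h.z_eq_zero
  have hv : v = 0 := by simpa using h.dt_eq
  have hux : u * (1 + x) = 0 := by linear_combination -h.du_eq / 2
  have hf : x ^ 6 = u ^ 2 := by linear_combination h.f_eq
  rcases mul_eq_zero.mp hux with rfl | hx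
  · simpa [hv] using hf
  · obtain rfl : x = -1 := by linear_combination hx
    have hcontra : (14 : K) = 0 := by linear_combination hf - h.dx_eq
    norm_num at hcontra

theorem eq_zero [IsAlgClosed K] (h : IsLagrangePoint l x z t u v) :
    x = 0 ∧ z = 0 ∧ t = 0 ∧ u = 0 ∧ v = 0 := by
  obtain ⟨s, rfl⟩ := IsAlgClosed.exists_pow_nat_eq l two_pos
  rcases eq_or_ne s 0 with rfl | hs
  · exact eq_zero_of_multiplier_eq_zero (by simpa using h)
  · simpa [hs] using (rescale s (by simpa using h)).eq_zero_of_multiplier_eq_one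

end IsLagrangePoint

theorem gradientAt_f37 (p : Fin 6 → ℂ) :
    gradientAt f37 p = ![6 * p 0 ^ 5, 4 * p 1 ^ 3, 3 * p 2 ^ 2, p 5, -2 * p 4, p 3] := by
  ext j
  fin_cases j <;> simp [gradientAt, f37, pderiv_X]

theorem gradientAt_g37 (p : Fin 6 → ℂ) :
    gradientAt g37 p = ![7 * p 0 ^ 6 + p 4 ^ 2, 0, 2 * p 2 * p 4 + p 3 ^ 2, 2 * p 2 * p 3,
      p 2 ^ 2 + 2 * p 0 * p 4, 2 * p 5] := by
  ext j
  fin_cases j <;> simp [gradientAt, g37, pderiv_X] <;> ring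

theorem eval_f37 (p : Fin 6 → ℂ) :
    eval p f37 = p 0 ^ 6 + p 1 ^ 4 + p 2 ^ 3 - p 4 ^ 2 + p 3 * p 5 := by
  simp [f37]

theorem eq_zero_of_eval_f37_eq_zero_of_forall_ne_one {p : Fin 6 → ℂ} (hf : eval p f37 = 0)
    (h : ∀ j ≠ 1, p j = 0) : p = 0 := by
  have hy : p 1 = 0 := by simpa [eval_f37, h] using hf
  ext j
  rcases eq_or_ne j 1 with rfl | hj
  exacts [hy, h j hj]

theorem apply_eq_zero_of_gradientAt_g37_eq_zero {p : Fin 6 → ℂ} (h : gradientAt g37 p = 0) :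
    ∀ j ≠ 1, p j = 0 := by
  have hx : 7 * p 0 ^ 6 + p 4 ^ 2 = 0 := by simpa [gradientAt_g37] using congrFun h 0
  have hz : 2 * p 2 * p 4 + p 3 ^ 2 = 0 := by simpa [gradientAt_g37] using congrFun h 2
  have ht : p 2 = 0 ∨ p 3 = 0 := by simpa [gradientAt_g37] using congrFun h 3
  have hu : p 2 ^ 2 + 2 * p 0 * p 4 = 0 := by simpa [gradientAt_g37] using congrFun h 4
  have hv : p 5 = 0 := by simpa [gradientAt_g37] using congrFun h 5
  have t_eq : p 3 = 0 := ht.elim (fun z_eq => by simpa [z_eq] using hz) id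
  have z_eq : p 2 = 0 := by
    have hz_cube : p 2 ^ 3 = 0 := by linear_combination p 2 * hu - p 0 * hz + p 0 * p 3 * t_eq
    simpa using hz_cube
  have hxu : p 0 = 0 ∨ p 4 = 0 := by simpa [z_eq] using hu
  have x_eq : p 0 = 0 := hxu.elim id fun u_eq => by simpa [u_eq] using hx
  have u_eq : p 4 = 0 := by simpa [x_eq] using hx
  intro j hj
  fin_cases j <;> first | assumption | exact absurd rfl hj

theorem smul_gradientAt_g37_ne_gradientAt_f37 {p : Fin 6 → ℂ} (hp : p ≠ 0)
    (hf : eval p f37 = 0) (l : ℂ) : l • gradientAt g37 p ≠ gradientAt f37 p := by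
  intro h
  have hy : p 1 = 0 := by simpa [gradientAt_f37, gradientAt_g37] using (congrFun h 1).symm
  have hlagrange : IsLagrangePoint l (p 0) (p 2) (p 3) (p 4) (p 5) :=
    { f_eq := by simpa [eval_f37, hy] using hf
      dx_eq := by simpa [gradientAt_f37, gradientAt_g37] using (congrFun h 0).symm
      dz_eq := by simpa [gradientAt_f37, gradientAt_g37] using (congrFun h 2).symm
      dt_eq := by simpa [gradientAt_f37, gradientAt_g37] using (congrFun h 3).symm
      du_eq := by simpa [gradientAt_f37, gradientAt_g37] using (congrFun h 4).symm
      dv_eq := by simpa [gradientAt_f37, gradientAt_g37] using (congrFun h 5).symm }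
  obtain ⟨hx, hz, ht, hu, hv⟩ := hlagrange.eq_zero
  exact hp (funext fun j => by fin_cases j <;> assumption)

theorem X1214_quasismooth_general (p : Fin 6 → ℂ) (hp : p ≠ 0) (hf : eval p f37 = 0) :
    (Matrix.of fun (i : Fin 2) (j : Fin 6) =>
      eval p (pderiv j (![f37, g37] i))).rank = 2 :=
  rank_jacobian_eq_two
    (fun hg => hp (eq_zero_of_eval_f37_eq_zero_of_forall_ne_one hf
      (apply_eq_zero_of_gradientAt_g37_eq_zero hg)))
    (smul_gradientAt_g37_ne_gradientAt_f37 hp hf)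

/-- At every nonzero point `p ∈ ℂ⁶` with `f(p) = g(p) = 0`, the `2×6` Jacobian
matrix of `(f, g)` has rank 2.  Hence
`X_{12,14} : (f = g = 0) ⊂ ℙ(2,3,4,5,6,7)` is quasismooth. -/
theorem X1214_quasismooth (p : Fin 6 → ℂ) (hp : p ≠ 0)
    (hf : eval p f37 = 0) (hg : eval p g37 = 0) :
    (Matrix.of fun (i : Fin 2) (j : Fin 6) =>
      eval p (pderiv j (![f37, g37] i))).rank = 2 :=
  X1214_quasismooth_general p hp hf
end

section
/- In ℂ[x, y, z, t, u, v, w, s], consider the nine polynomials: xt − tu − u² + v²; y²t − z²t − xu² + vw; yzt + t³ + tu² − xuv + tw + uw; yzu + t²u + u³ − y²v + z²v + xw; x²u − y²u + z²u − xu² + yzv + t²v + u²v + vw; x²v − xw + ts; −xyz − xt² − xu² − xw − us; −x³ + xy² − xz² + x²u + vs; and x²y² − y⁴ − x²z² + 3y²z² − z⁴ + yzt² − xy²u + xz²u + yzu² + y²uv − z²uv + xtuv + yzw − xuw − tuw + u²w − ws. Then at every point p ∈ ℂ⁸ with p ≠ 0 at which all nine polynomials vanish, the 9×8 Jacobian matrix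 of these polynomials evaluated at p has rank 4. (Hence the codimension-4 Fano 3-fold X ⊂ ℙ(1⁶,2²) they define is quasismooth.) -/
open MvPolynomial

/-- Coordinates `x = X 0, y = X 1, z = X 2, t = X 3, u = X 4, v = X 5,
w = X 6, s = X 7` (weights 1, 1, 1, 1, 1, 1, 2, 2).
`q₁ = xt − tu − u² + v²`. -/
noncomputable def q1 : MvPolynomial (Fin 8) ℂ :=
  X 0 * X 3 - X 3 * X 4 - X 4 ^ 2 + X 5 ^ 2

/-- `q₂ = y²t − z²t − xu² + vw`. -/
noncomputable def q2 : MvPolynomial (Fin 8) ℂ :=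
  X 1 ^ 2 * X 3 - X 2 ^ 2 * X 3 - X 0 * X 4 ^ 2 + X 5 * X 6

/-- `q₃ = yzt + t³ + tu² − xuv + tw + uw`. -/
noncomputable def q3 : MvPolynomial (Fin 8) ℂ :=
  X 1 * X 2 * X 3 + X 3 ^ 3 + X 3 * X 4 ^ 2 - X 0 * X 4 * X 5 +
    X 3 * X 6 + X 4 * X 6

/-- `q₄ = yzu + t²u + u³ − y²v + z²v + xw`. -/
noncomputable def q4 : MvPolynomial (Fin 8) ℂ :=
  X 1 * X 2 * X 4 + X 3 ^ 2 * X 4 + X 4 ^ 3 - X 1 ^ 2 * X 5 +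
    X 2 ^ 2 * X 5 + X 0 * X 6

/-- `q₅ = x²u − y²u + z²u − xu² + yzv + t²v + u²v + vw`. -/
noncomputable def q5 : MvPolynomial (Fin 8) ℂ :=
  X 0 ^ 2 * X 4 - X 1 ^ 2 * X 4 + X 2 ^ 2 * X 4 - X 0 * X 4 ^ 2 +
    X 1 * X 2 * X 5 + X 3 ^ 2 * X 5 + X 4 ^ 2 * X 5 + X 5 * X 6

/-- `q₆ = x²v − xw + ts`. -/
noncomputable def q6 : MvPolynomial (Fin 8) ℂ :=
  X 0 ^ 2 * X 5 - X 0 * X 6 + X 3 * X 7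

/-- `q₇ = −xyz − xt² − xu² − xw − us`. -/
noncomputable def q7 : MvPolynomial (Fin 8) ℂ :=
  -(X 0 * X 1 * X 2) - X 0 * X 3 ^ 2 - X 0 * X 4 ^ 2 - X 0 * X 6 -
    X 4 * X 7

/-- `q₈ = −x³ + xy² − xz² + x²u + vs`. -/
noncomputable def q8 : MvPolynomial (Fin 8) ℂ :=
  -(X 0 ^ 3) + X 0 * X 1 ^ 2 - X 0 * X 2 ^ 2 + X 0 ^ 2 * X 4 + X 5 * X 7

/-- `q₉ = x²y² − y⁴ − x²z² + 3y²z² − z⁴ + yzt² − xy²u + xz²u + yzu² + y²uv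
− z²uv + xtuv + yzw − xuw − tuw + u²w − ws`. -/
noncomputable def q9 : MvPolynomial (Fin 8) ℂ :=
  X 0 ^ 2 * X 1 ^ 2 - X 1 ^ 4 - X 0 ^ 2 * X 2 ^ 2 + 3 * X 1 ^ 2 * X 2 ^ 2 -
    X 2 ^ 4 + X 1 * X 2 * X 3 ^ 2 - X 0 * X 1 ^ 2 * X 4 +
    X 0 * X 2 ^ 2 * X 4 + X 1 * X 2 * X 4 ^ 2 + X 1 ^ 2 * X 4 * X 5 -
    X 2 ^ 2 * X 4 * X 5 + X 0 * X 3 * X 4 * X 5 + X 1 * X 2 * X 6 -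
    X 0 * X 4 * X 6 - X 3 * X 4 * X 6 + X 4 ^ 2 * X 6 - X 6 * X 7

/-- The nine unprojection equations of the codimension-4 Fano 3-fold
`X ⊂ ℙ(1⁶,2²)` (Hilbert series 24097, Jer₁₂ unprojection). -/
noncomputable def eqns24097 : Fin 9 → MvPolynomial (Fin 8) ℂ :=
  ![q1, q2, q3, q4, q5, q6, q7, q8, q9]

/-!
Put `r = q₅ - q₂ = x²u - (y² - z²)(t + u) + (yz + t² + u²)v`. The equations `q₁` and `r` cut out a
complete intersection of a quadric and a cubic in the `ℙ⁵` with coordinates `x, y, z, t, u, v`. It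
contains the planes `D = {t = u = v = 0}` and `E = {x = v = t + u = 0}`. The variable `w` occurs
linearly in `q₄, q₂, q₃` with coefficients `x, v, t + u`: it unprojects `E`. The variable `s` occurs
linearly in `q₆, q₇, q₈` with coefficients `t, -u, v`: it unprojects `D`.

Off the two planes the Jacobian therefore has rank at least `4` as soon as the gradients of `q₁` and
`r` are independent; if they are not, some member of the pencil they span is singular there, and
solving for such points leaves only `D ∪ E`. Over `D` and `E` one exhibits `4 × 4` minors.

Conversely, differentiating a syzygy `∑ Nᵢ qᵢ = 0` at a common zero gives `∑ Nᵢ(p) dqᵢ(p) = 0`.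
So the Jacobian `J` satisfies `rank N(p) + rank J(p) ≤ 9` for any matrix `N` of syzygies, and an
explicit `N` has rank at least `5` at every nonzero point of the cone.
-/

section General

variable {σ ι κ R K : Type*} [CommRing R] [Field K]

/-- The Jacobian matrix at the point `p` of a family `f` of polynomials. -/
noncomputable def jacobianAt (p : σ → R) (f : ι → MvPolynomial σ R) : Matrix ι σ R :=
  Matrix.of fun i j => eval p (pderiv j (f i))

lemma map_eval_mul_jacobianAt_eq_zero [Fintype ι] {p : σ → R} {f : ι → MvPolynomial σ R}
    {N : Matrix κ ι (MvPolynomial σ R)} (hN : N.mulVec f = 0) (hf : ∀ i, eval p (f i) = 0) :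
    N.map (eval p) * jacobianAt p f = 0 := by
  ext k j
  have hk : ∑ i, N k i * f i = 0 := congrFun hN k
  simpa [hf, Matrix.mul_apply, jacobianAt, pderiv_mul, map_sum] using
    congrArg (fun g => eval p (pderiv j g)) hk

lemma rank_map_eval_add_rank_jacobianAt_le [Finite κ] [Fintype ι] [Fintype σ]
    {p : σ → K} {f : ι → MvPolynomial σ K} {N : Matrix κ ι (MvPolynomial σ K)}
    (hN : N.mulVec f = 0) (hf : ∀ i, eval p (f i) = 0) :
    (N.map (eval p)).rank + (jacobianAt p f).rank ≤ Fintype.card ι :=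
  Matrix.rank_add_rank_le_card_of_mul_eq_zero (map_eval_mul_jacobianAt_eq_zero hN hf)

lemma le_rank_of_det_submatrix_ne_zero [Fintype σ] (A : Matrix ι σ K) {k : ℕ} (r : Fin k → ι)
    (c : Fin k → σ) (h : (A.submatrix r c).det ≠ 0) : k ≤ A.rank := by
  simpa [Matrix.rank_of_det_ne_zero h] using A.rank_submatrix_le r c

lemma le_rank_of_lowerTriangular_minor [Fintype σ] (A : Matrix ι σ K) {k : ℕ}
    (r : Fin k → ι) (c : Fin k → σ) (h0 : ∀ a b, a < b → A (r a) (c b) = 0)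
    (hd : ∀ a, A (r a) (c a) ≠ 0) : k ≤ A.rank := by
  have hlower : (A.submatrix r c).IsLowerTriangular := fun a b hab => h0 a b hab
  refine le_rank_of_det_submatrix_ne_zero A r c ?_
  simpa [Matrix.det_of_isLowerTriangular _ hlower, Finset.prod_ne_zero_iff] using hd

lemma linearIndependent_vecCons_of_apply_ne_zero {k : ℕ} {v : Fin k → σ → K} {a : σ → K} {j : σ}
    (hv : LinearIndependent K v) (h0 : ∀ i, v i j = 0) (ha : a j ≠ 0) :
    LinearIndependent K (Matrix.vecCons a v) := by
  refine linearIndependent_finCons.2 ⟨hv, fun hmem => ha ?_⟩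
  have hle : Submodule.span K (Set.range v) ≤ LinearMap.ker (LinearMap.proj (R := K) j) :=
    Submodule.span_le.2 (Set.range_subset_iff.2 h0)
  exact hle hmem

lemma le_rank_of_linearIndependent [Finite ι] [Fintype σ] {A : Matrix ι σ K} {k : ℕ}
    {v : Fin k → σ → K} (hv : LinearIndependent K v)
    (h : ∀ i, v i ∈ Submodule.span K (Set.range A.row)) : k ≤ A.rank := by
  rw [A.rank_eq_finrank_span_row]
  simpa [finrank_span_eq_card hv] using
    Submodule.finrank_mono (Submodule.span_le.2 (Set.range_subset_iff.2 h))

end General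

section Syzygies

/-- A matrix of syzygies between the nine equations, used to bound the rank of their Jacobian from
above. Its upper left `5 × 5` block is the skew matrix whose signed `4 × 4` Pfaffians are
`q₁, …, q₅`; the rows below come from the unprojection. -/
def syzygyMatrix {R : Type*} [CommRing R] (x y z t u v w s : R) : Matrix (Fin 16) (Fin 9) R :=
  let a := y * z + t ^ 2 + u ^ 2
  let n := y ^ 2 - z ^ 2
  !![0, -(a + w), n, -(x * u), w, 0, 0, 0, 0;
    a + w, 0, u - x, u, -v, 0, 0, 0, 0;
    -n, x - u, 0, -v, u, 0, 0, 0, 0;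
    x * u, -u, v, 0, -t, 0, 0, 0, 0;
    -w, v, -u, t, 0, 0, 0, 0, 0;
    0, 0, x, 0, 0, u, t, 0, 0;
    0, 0, 0, 0, x, 0, v, u, 0;
    x ^ 2, -x, 0, 0, 0, -v, 0, t, 0;
    -s, 0, 0, x, 0, x - u, u, v, 0;
    0, -s, 0, x ^ 2, 0, n, x * u, w, 0;
    0, 0, -s, 0, 0, a + w, x * v - w, 0, 0;
    0, 0, 0, -(x * u) - s, 0, t * u, -(y * z) - u ^ 2, -n, -x;
    0, 0, 0, 0, -s, 0, n - x ^ 2 + x * u, a + w, 0;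
    0, n - x ^ 2 + x * u, -(y * z) - u ^ 2, w + t * u, -(x * u), w, 0, 0, t;
    0, 0, t * u, u ^ 2 - (a + w), -n, 0, -w, 0, u;
    0, 0, t * v, x ^ 2 - x * u - n + u * v, -a, 0, 0, w, v]

lemma syzygyMatrix_mulVec_eqns :
    (syzygyMatrix (X 0) (X 1) (X 2) (X 3) (X 4) (X 5) (X 6) (X 7)).mulVec eqns24097 = 0 := by
  ext1 i
  fin_cases i <;>
    simp [syzygyMatrix, eqns24097, Matrix.mulVec, dotProduct, Fin.sum_univ_succ,
      q1, q2, q3, q4, q5, q6, q7, q8, q9] <;> ring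

lemma map_syzygyMatrix {R S : Type*} [CommRing R] [CommRing S] (φ : R →+* S)
    (x y z t u v w s : R) : (syzygyMatrix x y z t u v w s).map φ =
      syzygyMatrix (φ x) (φ y) (φ z) (φ t) (φ u) (φ v) (φ w) (φ s) := by
  ext i j
  fin_cases i <;> revert j <;> simp [Fin.forall_fin_succ, syzygyMatrix]

variable {K : Type*} [Field K] {x y z t u v w s : K}

lemma five_le_rank_syzygyMatrix
    (h : t ≠ 0 ∨ u ≠ 0 ∨ v ≠ 0 ∨ x ≠ 0 ∨ w ≠ 0 ∨ s ≠ 0 ∨ y * z ≠ 0) :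
    5 ≤ (syzygyMatrix x y z t u v w s).rank := by
  by_cases ht : t ≠ 0
  · exact le_rank_of_lowerTriangular_minor _ ![4, 3, 5, 7, 13] ![3, 4, 6, 7, 8]
      (by simp [Fin.forall_fin_succ, syzygyMatrix])
      (by simp [Fin.forall_fin_succ, syzygyMatrix, ht])
  by_cases hu : u ≠ 0
  · exact le_rank_of_lowerTriangular_minor _ ![4, 2, 5, 6, 14] ![2, 4, 5, 7, 8]
      (by simp [Fin.forall_fin_succ, syzygyMatrix])
      (by simp [Fin.forall_fin_succ, syzygyMatrix, hu])
  by_cases hv : v ≠ 0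
  · exact le_rank_of_lowerTriangular_minor _ ![4, 1, 7, 6, 15] ![1, 4, 5, 6, 8]
      (by simp [Fin.forall_fin_succ, syzygyMatrix])
      (by simp [Fin.forall_fin_succ, syzygyMatrix, hv])
  obtain ⟨rfl, rfl, rfl⟩ : t = 0 ∧ u = 0 ∧ v = 0 := by tauto
  by_cases hx : x ≠ 0
  · exact le_rank_of_lowerTriangular_minor _ ![2, 1, 6, 8, 11] ![1, 2, 4, 5, 8]
      (by simp [Fin.forall_fin_succ, syzygyMatrix])
      (by simp [Fin.forall_fin_succ, syzygyMatrix, hx])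
  obtain rfl : x = 0 := by tauto
  by_cases hw : w ≠ 0
  · exact le_rank_of_lowerTriangular_minor _ ![4, 0, 13, 14, 9] ![0, 4, 5, 6, 7]
      (by simp [Fin.forall_fin_succ, syzygyMatrix])
      (by simp [Fin.forall_fin_succ, syzygyMatrix, hw])
  obtain rfl : w = 0 := by tauto
  by_cases hs : s ≠ 0
  · exact le_rank_of_lowerTriangular_minor _ ![8, 9, 10, 11, 12] ![0, 1, 2, 3, 4]
      (by simp [Fin.forall_fin_succ, syzygyMatrix])
      (by simp [Fin.forall_fin_succ, syzygyMatrix, hs])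
  obtain rfl : s = 0 := by tauto
  have hyz : y ≠ 0 ∧ z ≠ 0 := by simpa using h
  exact le_rank_of_lowerTriangular_minor _ ![1, 0, 14, 10, 12] ![0, 1, 3, 5, 7]
    (by simp [Fin.forall_fin_succ, syzygyMatrix])
    (by simp [Fin.forall_fin_succ, syzygyMatrix, hyz])

end Syzygies

section Pencil

variable {K : Type*} [Field K]

/-- The point `(x, y, z, t, u, v)` lies on the quadric `q₁ = 0`, and there the gradient of the cubic
`q₅ - q₂ = x²u - (y² - z²)(t + u) + (yz + t² + u²)v` is `l` times the gradient of `q₁`: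
a member of the pencil spanned by the two is singular there. -/
structure IsPencilCritical (x y z t u v l : K) : Prop where
  quadric : x * t - t * u - u ^ 2 + v ^ 2 = 0
  grad_x : 2 * x * u = l * t
  grad_y : z * v = 2 * y * (t + u)
  grad_z : y * v = -2 * z * (t + u)
  grad_t : 2 * t * v - y ^ 2 + z ^ 2 = l * (x - u)
  grad_u : x ^ 2 - y ^ 2 + z ^ 2 + 2 * u * v = -l * (t + 2 * u)
  grad_v : y * z + t ^ 2 + u ^ 2 = 2 * l * v

namespace IsPencilCritical

variable {x y z t u v l ι : K}

lemma div (h : IsPencilCritical x y z t u v l) (ht : t ≠ 0) :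
    IsPencilCritical (x / t) (y / t) (z / t) 1 (u / t) (v / t) (l / t) := by
  constructor <;> field_simp
  · linear_combination h.quadric
  · linear_combination h.grad_x
  · linear_combination h.grad_y
  · linear_combination h.grad_z
  · linear_combination h.grad_t
  · linear_combination h.grad_u
  · linear_combination h.grad_v

variable [CharZero K]

lemma eq_zero_of_t_eq_zero (h : IsPencilCritical x y z 0 u v l) : u = 0 ∧ v = 0 := by
  obtain ⟨hq, hx, hy, hz, ht, hu, -⟩ := h
  have hv : v ^ 2 = u ^ 2 := by linear_combination hq
  suffices u = 0 from ⟨this, by simpa [this] using hv⟩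
  by_contra hu0
  obtain rfl : x = 0 := by simpa [hu0] using hx
  obtain rfl : y = 0 := by
    have : y * (5 * u ^ 2) = 0 := by linear_combination v * hz - 2 * u * hy - y * hv
    simpa [hu0] using this
  obtain rfl : z = 0 := by simpa [hu0] using hz
  obtain rfl : l = 0 := by simpa [hu0] using ht
  obtain rfl : v = 0 := by simpa [hu0] using hu
  exact hu0 (by simpa using hv.symm)

lemma axis_octic_ne_of_cubic (hcubic : 4 * u ^ 3 + u ^ 2 + 8 * u + 5 = 0) :
    27 * (1 + u ^ 2) ≠ 64 * u ^ 5 * (1 + u) ^ 2 * (1 + 4 * u) := by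
  intro hoctic
  have hrem : 853 + 1409 * u - 116 * u ^ 2 = 0 := by
    linear_combination (hoctic - (-677 - 44 * u + 304 * u ^ 2 + 64 * u ^ 3 - 128 * u ^ 4
      - 64 * u ^ 5) * hcubic) / 4
  -- Up to a constant factor, the resultant of the polynomials in `hcubic` and `hrem`.
  have : (33883506 : K) = 0 := by
    linear_combination (3142897 - 470289 * u + 1434668 * u ^ 2) * hrem
      + (-529401527 + 41605372 * u) * hcubic
  norm_num at this

lemma not_axis : ¬ IsPencilCritical x 0 0 1 u v l := by
  rintro ⟨hq, hl, -, -, ht, hu, hv⟩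
  obtain rfl : l = 2 * x * u := by linear_combination -hl
  have hu0 : u ≠ 0 := by
    rintro rfl
    norm_num at hv
  have hx0 : x ≠ 0 := by
    rintro rfl
    have hv0 : v = 0 := by linear_combination ht / 2
    have : (2 : K) = 0 := by linear_combination (2 + u) * hv + (1 + u) * (hq - v * hv0)
    norm_num at this
  have hx3 : 3 * x = 4 * u * (1 + u) := by
    -- Euler's relation turns the gradient equations into the vanishing of the cubic.
    have hr : x ^ 2 * u + (1 + u ^ 2) * v = 0 := by
      linear_combination (ht + u * hu + v * hv + 4 * x * u * hq) / 3
    have hxv : x + 4 * v ^ 2 = 0 :=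
      mul_left_cancel₀ (mul_ne_zero hx0 hu0) (by linear_combination hr - v * hv)
    linear_combination 4 * hq - hxv
  have hcubic : 4 * u ^ 3 + u ^ 2 + 8 * u + 5 = 0 := by
    have : x * (1 + 2 * u ^ 2) = 2 * u * (u ^ 2 - 2 * u - 1) :=
      mul_left_cancel₀ hx0 (by linear_combination hu - u * ht)
    refine mul_left_cancel₀ hu0 ?_
    linear_combination (3 * this - (1 + 2 * u ^ 2) * hx3) / 2
  have hoctic : 27 * (1 + u ^ 2) = 64 * u ^ 5 * (1 + u) ^ 2 * (1 + 4 * u) := by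
    calc 27 * (1 + u ^ 2) = 4 * u ^ 2 * (3 * x) ^ 2 * (3 * x - 3 * u) := by
          linear_combination 27 * hv + 54 * x * u * ht
      _ = _ := by rw [hx3]; ring
  exact axis_octic_ne_of_cubic hcubic hoctic

lemma diagonal_quartics_ne (hι : ι ^ 2 = -1) (hu1 : u + 1 ≠ 0)
    (hA : 4 * ι * (1 - u) = (u + 1) * (5 * u + 4) * (10 * u ^ 2 + 15 * u + 4)) :
    2 * ι * (1 + u ^ 2) ≠ -u * (u + 1) * (5 * u + 4) ^ 2 := by
  intro hB
  have hu4 : 5 * u + 4 ≠ 0 := by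
    intro h
    have : ι = 0 := by
      linear_combination 5 / 36 * hA
        + (ι / 9 + 5 / 36 * (u + 1) * (10 * u ^ 2 + 15 * u + 4)) * h
    norm_num [this] at hι
  have hQ : 10 * u ^ 4 + 5 * u ^ 3 + 16 * u ^ 2 + 23 * u + 4 = 0 := by
    refine mul_left_cancel₀ (mul_ne_zero hu1 hu4) ?_
    linear_combination 2 * (1 - u) * hB - (1 + u ^ 2) * hA
  have hC : 4 * ι * (1 - u) = 140 * u ^ 3 + 115 * u ^ 2 - 19 * u - 4 := by
    linear_combination hA + 5 * hQ
  have hG : ι * (16 * u ^ 2 - 12 * u + 28) = 217 * u ^ 2 + 275 * u + 68 := by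
    linear_combination 3 * hC + 8 * hB - 20 * hQ
  -- Eliminating `u` between `hC` and `hG` leaves a nonzero Gaussian integer.
  have hN : (359792736 : K) + 515826880 * ι = 0 := by
    linear_combination
      ((17775294 - 38748285 * ι) + (2147582 - 31374411 * ι) * u) * hC
      + ((1423934 - 8233069 * ι) + (15734025 * ι - 9030970) * u
        + (20030500 * ι - 2862440) * u ^ 2) * hG
      - (-385519072 + 568845024 * u + 365814240 * u ^ 2 + 11378400 * u ^ 3 + 320488000 * u ^ 4) * hι
  have : (359792736 : K) ^ 2 + 515826880 ^ 2 = 0 := by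
    linear_combination (359792736 - 515826880 * ι) * hN + 515826880 ^ 2 * hι
  norm_num at this

lemma not_diagonal (hι : ι ^ 2 = -1) (hu1 : u + 1 ≠ 0) :
    ¬ IsPencilCritical x (ι * z) z 1 u (2 * ι * (u + 1)) l := by
  rintro ⟨hq, hl, -, -, ht, hu, hv⟩
  obtain rfl : x = (5 * u + 4) * (u + 1) := by
    linear_combination hq - 4 * (u + 1) ^ 2 * hι
  obtain rfl : l = 2 * ((5 * u + 4) * (u + 1)) * u := by linear_combination -hl
  have hz : z ^ 2 = 8 * (5 * u + 4) * u * (u + 1) ^ 2 + ι * (1 + u ^ 2) := by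
    linear_combination -ι * hv + (z ^ 2 - 8 * (5 * u + 4) * u * (u + 1) ^ 2) * hι
  have hA : 4 * ι * (1 - u) = (u + 1) * (5 * u + 4) * (10 * u ^ 2 + 15 * u + 4) :=
    mul_left_cancel₀ hu1 (by linear_combination ht - hu)
  exact diagonal_quartics_ne hι hu1 hA
    (by linear_combination (ht + z ^ 2 * hι - 2 * hz - u * hA) / 3)

lemma eq_zero_of_t_eq_one (h : IsPencilCritical x y z 1 u v l) : x = 0 ∧ v = 0 ∧ 1 + u = 0 := by
  by_cases hyz : y = 0 ∧ z = 0
  · obtain ⟨rfl, rfl⟩ := hyz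
    exact absurd h not_axis
  have hv : v ^ 2 = -4 * (u + 1) ^ 2 := by
    have hy : y * (v ^ 2 + 4 * (u + 1) ^ 2) = 0 := by
      linear_combination v * h.grad_z - 2 * (u + 1) * h.grad_y
    have hz : z * (v ^ 2 + 4 * (u + 1) ^ 2) = 0 := by
      linear_combination v * h.grad_y + 2 * (u + 1) * h.grad_z
    have : v ^ 2 + 4 * (u + 1) ^ 2 = 0 := by
      by_contra hne
      exact hyz ⟨(mul_eq_zero.1 hy).resolve_right hne, (mul_eq_zero.1 hz).resolve_right hne⟩
    linear_combination this
  by_cases hu : u + 1 = 0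
  · obtain rfl : v = 0 := by simpa [hu] using hv
    exact ⟨by linear_combination h.quadric + u * hu, rfl, by rw [add_comm, hu]⟩
  · obtain ⟨ι, rfl⟩ : ∃ ι, v = 2 * ι * (u + 1) := ⟨v / (2 * (u + 1)), by field_simp⟩
    have hι : ι ^ 2 = -1 := mul_left_cancel₀ (pow_ne_zero 2 hu) (by linear_combination hv / 4)
    obtain rfl : y = ι * z := mul_left_cancel₀ hu (by linear_combination -h.grad_y / 2)
    exact absurd h (not_diagonal hι hu)

lemma mem_planes (h : IsPencilCritical x y z t u v l) :
    t = 0 ∧ u = 0 ∧ v = 0 ∨ x = 0 ∧ v = 0 ∧ t + u = 0 := by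
  by_cases ht : t = 0
  · subst ht
    exact .inl ⟨rfl, h.eq_zero_of_t_eq_zero⟩
  · have h1 := (h.div ht).eq_zero_of_t_eq_one
    field_simp at h1
    exact .inr (by simpa using h1)

end IsPencilCritical

variable [CharZero K] {x y z t u v : K}

lemma linearIndependent_pencil (hq : x * t - t * u - u ^ 2 + v ^ 2 = 0)
    (hD : ¬ (t = 0 ∧ u = 0 ∧ v = 0)) (hE : ¬ (x = 0 ∧ v = 0 ∧ t + u = 0)) :
    LinearIndependent K ![![t, 0, 0, x - u, -t - 2 * u, 2 * v, 0, 0],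
      ![2 * x * u, z * v - 2 * y * (t + u), y * v + 2 * z * (t + u), 2 * t * v - y ^ 2 + z ^ 2,
        x ^ 2 - y ^ 2 + z ^ 2 + 2 * u * v, y * z + t ^ 2 + u ^ 2, 0, 0]] := by
  refine LinearIndependent.pair_iff.2 fun α β hαβ => ?_
  obtain ⟨hx, hy, hz, ht, hu, hv⟩ :
      α * t + β * (2 * x * u) = 0 ∧ β * (z * v - 2 * y * (t + u)) = 0 ∧
      β * (y * v + 2 * z * (t + u)) = 0 ∧
      α * (x - u) + β * (2 * t * v - y ^ 2 + z ^ 2) = 0 ∧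
      α * (-t - 2 * u) + β * (x ^ 2 - y ^ 2 + z ^ 2 + 2 * u * v) = 0 ∧
      α * (2 * v) + β * (y * z + t ^ 2 + u ^ 2) = 0 := by
    simpa using hαβ
  suffices hβ : β = 0 by
    subst hβ
    refine ⟨by_contra fun hα => hD ?_, rfl⟩
    simp_all
  by_contra hβ
  have hl : β * (-α / β) = -α := by field_simp
  have hcrit : IsPencilCritical x y z t u v (-α / β) := by
    refine ⟨hq, ?_, ?_, ?_, ?_, ?_, ?_⟩ <;> refine mul_left_cancel₀ hβ ?_
    · linear_combination hx - t * hl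
    · linear_combination hy
    · linear_combination hz
    · linear_combination ht - (x - u) * hl
    · linear_combination hu + (t + 2 * u) * hl
    · linear_combination hv - 2 * v * hl
  exact hcrit.mem_planes.elim hD hE

end Pencil

section Jacobian

variable {x y z t u v w s : ℂ}

set_option maxHeartbeats 1600000 in
-- 72 partial derivatives are computed and normalised in this one declaration.
lemma jacobianAt_eqns : jacobianAt ![x, y, z, t, u, v, w, s] eqns24097 =
    !![t, 0, 0, x - u, -t - 2 * u, 2 * v, 0, 0;
      -u ^ 2, 2 * y * t, -(2 * z * t), y ^ 2 - z ^ 2, -(2 * x * u), w, v, 0;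
      -(u * v), z * t, y * t, y * z + 3 * t ^ 2 + u ^ 2 + w, 2 * t * u - x * v + w, -(x * u),
        t + u, 0;
      w, z * u - 2 * y * v, y * u + 2 * z * v, 2 * t * u, y * z + t ^ 2 + 3 * u ^ 2,
        z ^ 2 - y ^ 2, x, 0;
      2 * x * u - u ^ 2, z * v - 2 * y * u, y * v + 2 * z * u, 2 * t * v,
        x ^ 2 - y ^ 2 + z ^ 2 - 2 * x * u + 2 * u * v, y * z + t ^ 2 + u ^ 2 + w, v, 0;
      2 * x * v - w, 0, 0, s, 0, x ^ 2, -x, t;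
      -(y * z) - t ^ 2 - u ^ 2 - w, -(x * z), -(x * y), -(2 * x * t), -(2 * x * u) - s, 0, -x, -u;
      -(3 * x ^ 2) + y ^ 2 - z ^ 2 + 2 * x * u, 2 * x * y, -(2 * x * z), 0, x ^ 2, s, 0, v;
      2 * x * y ^ 2 - 2 * x * z ^ 2 - y ^ 2 * u + z ^ 2 * u + t * u * v - u * w,
        2 * x ^ 2 * y - 4 * y ^ 3 + 6 * y * z ^ 2 + z * t ^ 2 - 2 * x * y * u + z * u ^ 2
          + 2 * y * u * v + z * w,
        -(2 * x ^ 2 * z) + 6 * y ^ 2 * z - 4 * z ^ 3 + y * t ^ 2 + 2 * x * z * u + y * u ^ 2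
          - 2 * z * u * v + y * w,
        2 * y * z * t + x * u * v - u * w,
        -(x * y ^ 2) + x * z ^ 2 + 2 * y * z * u + y ^ 2 * v - z ^ 2 * v + x * t * v - x * w
          - t * w + 2 * u * w,
        y ^ 2 * u - z ^ 2 * u + x * t * u, y * z - x * u - t * u + u ^ 2 - s, -w] := by
  have h3 (j : Fin 8) : pderiv j (3 : MvPolynomial (Fin 8) ℂ) = 0 := (pderiv j).map_natCast 3
  ext i j
  fin_cases i <;> fin_cases j <;>
    simp [jacobianAt, eqns24097, q1, q2, q3, q4, q5, q6, q7, q8, q9, pderiv_X, h3] <;> ring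

lemma four_le_rank_of_planeD_of_x_ne_zero (hx : x ≠ 0)
    (h : ∀ i, eval ![x, y, z, 0, 0, 0, w, s] (eqns24097 i) = 0) :
    4 ≤ (jacobianAt ![x, y, z, 0, 0, 0, w, s] eqns24097).rank := by
  obtain rfl : w = 0 := by simpa [eqns24097, q4, hx] using h 3
  have hyz : y = 0 ∨ z = 0 := by simpa [eqns24097, q7, hx] using h 6
  have hx2 : x ^ 2 = y ^ 2 - z ^ 2 := by
    have : -x ^ 3 + x * y ^ 2 - x * z ^ 2 = 0 := by simpa [eqns24097, q8] using h 7
    exact mul_left_cancel₀ hx (by linear_combination -this)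
  have hd : -(3 * x ^ 2) + y ^ 2 - z ^ 2 ≠ 0 := by
    rw [show -(3 * x ^ 2) + y ^ 2 - z ^ 2 = -2 * x ^ 2 by linear_combination -hx2]
    simpa using hx
  rw [jacobianAt_eqns]
  rcases hyz with rfl | rfl
  · have hz : z ≠ 0 := by
      rintro rfl
      simp_all
    exact le_rank_of_lowerTriangular_minor _ ![0, 3, 7, 6] ![3, 6, 0, 1]
      (by simp [Fin.forall_fin_succ]) (by simpa [Fin.forall_fin_succ, hx, hz] using hd)
  · have hy : y ≠ 0 := by
      rintro rfl
      simp_all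
    exact le_rank_of_lowerTriangular_minor _ ![0, 3, 7, 6] ![3, 6, 0, 2]
      (by simp [Fin.forall_fin_succ]) (by simpa [Fin.forall_fin_succ, hx, hy] using hd)

lemma four_le_rank_of_planeD_of_w_ne_zero (hw : w ≠ 0) :
    4 ≤ (jacobianAt ![0, y, z, 0, 0, 0, w, s] eqns24097).rank := by
  rw [jacobianAt_eqns]
  exact le_rank_of_lowerTriangular_minor _ ![1, 2, 3, 8] ![5, 4, 0, 7]
    (by simp [Fin.forall_fin_succ]) (by simp [Fin.forall_fin_succ, hw])

lemma four_le_rank_of_planeD_of_s_ne_zero (hs : s ≠ 0) :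
    4 ≤ (jacobianAt ![0, y, z, 0, 0, 0, 0, s] eqns24097).rank := by
  rw [jacobianAt_eqns]
  have hcol :
      -(4 * y ^ 3) + 6 * y * z ^ 2 ≠ 0 ∨ 6 * y ^ 2 * z - 4 * z ^ 3 ≠ 0 ∨ y * z - s ≠ 0 := by
    by_contra! hc
    obtain ⟨hy3, hz3, rfl⟩ : _ ∧ _ ∧ s = y * z := ⟨hc.1, hc.2.1, (sub_eq_zero.1 hc.2.2).symm⟩
    have hm : y ≠ 0 ∧ z ≠ 0 := by simpa using hs
    have hy2 : -(4 * y ^ 2) + 6 * z ^ 2 = 0 := mul_left_cancel₀ hm.1 (by linear_combination hy3)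
    have hz2 : 6 * y ^ 2 - 4 * z ^ 2 = 0 := mul_left_cancel₀ hm.2 (by linear_combination hz3)
    exact hm.2 (pow_eq_zero_iff two_ne_zero |>.1 (by linear_combination (3 * hy2 + 2 * hz2) / 10))
  rcases hcol with hd | hd | hd
  · exact le_rank_of_lowerTriangular_minor _ ![5, 6, 7, 8] ![3, 4, 5, 1]
      (by simp [Fin.forall_fin_succ]) (by simpa [Fin.forall_fin_succ, hs] using hd)
  · exact le_rank_of_lowerTriangular_minor _ ![5, 6, 7, 8] ![3, 4, 5, 2]
      (by simp [Fin.forall_fin_succ]) (by simpa [Fin.forall_fin_succ, hs] using hd)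
  · exact le_rank_of_lowerTriangular_minor _ ![5, 6, 7, 8] ![3, 4, 5, 6]
      (by simp [Fin.forall_fin_succ]) (by simpa [Fin.forall_fin_succ, hs] using hd)

lemma sq_mul_sq_eq_of_line (h : ∀ i, eval ![0, y, z, 0, 0, 0, 0, 0] (eqns24097 i) = 0) :
    y ^ 2 * z ^ 2 = (y ^ 2 - z ^ 2) ^ 2 := by
  have h9 : -y ^ 4 + 3 * y ^ 2 * z ^ 2 - z ^ 4 = 0 := by simpa [eqns24097, q9] using h 8
  linear_combination h9

lemma four_le_rank_of_line (h : ∀ i, eval ![0, y, z, 0, 0, 0, 0, 0] (eqns24097 i) = 0)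
    (hyz : y * z ≠ 0) : 4 ≤ (jacobianAt ![0, y, z, 0, 0, 0, 0, 0] eqns24097).rank := by
  have hm : y ≠ 0 ∧ z ≠ 0 := by simpa using hyz
  have hn : y ^ 2 - z ^ 2 ≠ 0 := fun hn => by simpa [hn, hm] using sq_mul_sq_eq_of_line h
  rw [jacobianAt_eqns]
  exact le_rank_of_lowerTriangular_minor _ ![1, 3, 7, 8] ![3, 4, 0, 6]
    (by simp [Fin.forall_fin_succ]) (by simp [Fin.forall_fin_succ, hm, hn])

lemma four_le_rank_of_planeE (ht : t ≠ 0)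
    (h : ∀ i, eval ![0, y, z, t, -t, 0, w, s] (eqns24097 i) = 0) :
    4 ≤ (jacobianAt ![0, y, z, t, -t, 0, w, s] eqns24097).rank := by
  have hyz : y * z = -2 * t ^ 2 := by
    have : y * z * t + t ^ 3 + t * t ^ 2 = 0 := by simpa [eqns24097, q3] using h 2
    exact mul_left_cancel₀ ht (by linear_combination this)
  have hy2 : y ^ 2 = z ^ 2 := by
    have : y ^ 2 * t - z ^ 2 * t = 0 := by simpa [eqns24097, q2] using h 1
    exact mul_left_cancel₀ ht (by linear_combination this)
  have hy : y ≠ 0 := by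
    rintro rfl
    simp_all
  have hminor : (jacobianAt ![0, y, z, t, -t, 0, w, s] eqns24097).submatrix
      ![0, 1, 2, 5] ![0, 1, 2, 7] =
      !![t, 0, 0, 0; -t ^ 2, 2 * y * t, -(2 * z * t), 0; 0, z * t, y * t, 0; -w, 0, 0, t] := by
    rw [jacobianAt_eqns]
    ext i j
    fin_cases i <;> fin_cases j <;> simp
  have hdet : (!![t, 0, 0, 0; -t ^ 2, 2 * y * t, -(2 * z * t), 0; 0, z * t, y * t, 0;
      -w, 0, 0, t] : Matrix (Fin 4) (Fin 4) ℂ).det = 4 * y ^ 2 * t ^ 4 := by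
    calc _ = 2 * t ^ 4 * (y ^ 2 + z ^ 2) := by
          simp [Matrix.det_succ_row_zero, Fin.sum_univ_succ, Fin.succAbove]
          ring
      _ = 4 * y ^ 2 * t ^ 4 := by rw [← hy2]; ring
  refine le_rank_of_det_submatrix_ne_zero _ ![0, 1, 2, 5] ![0, 1, 2, 7] ?_
  simp [hminor, hdet, hy, ht]

lemma four_le_rank_of_notMem_planes (h : ∀ i, eval ![x, y, z, t, u, v, w, s] (eqns24097 i) = 0)
    (hD : ¬ (t = 0 ∧ u = 0 ∧ v = 0)) (hE : ¬ (x = 0 ∧ v = 0 ∧ t + u = 0)) :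
    4 ≤ (jacobianAt ![x, y, z, t, u, v, w, s] eqns24097).rank := by
  have hq : x * t - t * u - u ^ 2 + v ^ 2 = 0 := by simpa [eqns24097, q1] using h 0
  set J := jacobianAt ![x, y, z, t, u, v, w, s] eqns24097 with hJ
  rw [jacobianAt_eqns] at hJ
  have hpencil : LinearIndependent ℂ ![J 0, J 4 - J 1] := by
    have h41 : J 4 - J 1 = ![2 * x * u, z * v - 2 * y * (t + u), y * v + 2 * z * (t + u),
        2 * t * v - y ^ 2 + z ^ 2, x ^ 2 - y ^ 2 + z ^ 2 + 2 * u * v, y * z + t ^ 2 + u ^ 2,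
        0, 0] := by
      ext j
      fin_cases j <;> simp [hJ] <;> ring
    rw [h41, show J 0 = ![t, 0, 0, x - u, -t - 2 * u, 2 * v, 0, 0] by rw [hJ]; rfl]
    exact linearIndependent_pencil hq hD hE
  obtain ⟨l, hl⟩ : ∃ l, J l 7 ≠ 0 := by
    by_contra! hall
    exact hD ⟨by simpa [hJ] using hall 5, by simpa [hJ] using hall 6, by simpa [hJ] using hall 7⟩
  obtain ⟨k, hk7, hk6⟩ : ∃ k, J k 7 = 0 ∧ J k 6 ≠ 0 := by
    by_contra! hall
    exact hE ⟨by simpa [hJ] using hall 3, by simpa [hJ] using hall 1, by simpa [hJ] using hall 2⟩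
  have hmem (i : Fin 9) : J i ∈ Submodule.span ℂ (Set.range J.row) :=
    Submodule.subset_span ⟨i, rfl⟩
  refine le_rank_of_linearIndependent (v := ![J l, J k, J 0, J 4 - J 1]) ?_ ?_
  · refine linearIndependent_vecCons_of_apply_ne_zero (j := 7) ?_ ?_ hl
    · refine linearIndependent_vecCons_of_apply_ne_zero (j := 6) hpencil ?_ hk6
      simp [Fin.forall_fin_succ, hJ]
    · have h07 : J 0 7 = 0 := by simp [hJ]
      have h17 : J 1 7 = 0 := by simp [hJ]
      have h47 : J 4 7 = 0 := by simp [hJ]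
      simp [Fin.forall_fin_succ, hk7, h07, h17, h47]
  · simp [Fin.forall_fin_succ, hmem, sub_mem]

lemma exists_ne_zero_of_eval_eqns_eq_zero (hp : ![x, y, z, t, u, v, w, s] ≠ 0)
    (h : ∀ i, eval ![x, y, z, t, u, v, w, s] (eqns24097 i) = 0) :
    t ≠ 0 ∨ u ≠ 0 ∨ v ≠ 0 ∨ x ≠ 0 ∨ w ≠ 0 ∨ s ≠ 0 ∨ y * z ≠ 0 := by
  by_contra! hc
  obtain ⟨rfl, rfl, rfl, rfl, rfl, rfl, hyz⟩ := hc
  have h9 := sq_mul_sq_eq_of_line h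
  obtain ⟨rfl, rfl⟩ : y = 0 ∧ z = 0 := by
    rcases mul_eq_zero.1 hyz with hy | hz
    · simpa [hy] using h9.symm
    · simpa [hz] using h9.symm
  simp at hp

lemma four_le_rank_jacobianAt_eqns (hp : ![x, y, z, t, u, v, w, s] ≠ 0)
    (h : ∀ i, eval ![x, y, z, t, u, v, w, s] (eqns24097 i) = 0) :
    4 ≤ (jacobianAt ![x, y, z, t, u, v, w, s] eqns24097).rank := by
  by_cases hD : t = 0 ∧ u = 0 ∧ v = 0
  · obtain ⟨rfl, rfl, rfl⟩ := hD
    by_cases hx : x = 0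
    · subst hx
      by_cases hw : w = 0
      · subst hw
        by_cases hs : s = 0
        · subst hs
          exact four_le_rank_of_line h (by simpa using exists_ne_zero_of_eval_eqns_eq_zero hp h)
        · exact four_le_rank_of_planeD_of_s_ne_zero hs
      · exact four_le_rank_of_planeD_of_w_ne_zero hw
    · exact four_le_rank_of_planeD_of_x_ne_zero hx h
  by_cases hE : x = 0 ∧ v = 0 ∧ t + u = 0
  · obtain ⟨rfl, rfl, htu⟩ := hE
    obtain rfl : u = -t := by linear_combination htu
    exact four_le_rank_of_planeE (by simpa using hD) h
  · exact four_le_rank_of_notMem_planes h hD hE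

lemma rank_jacobianAt_eqns_le_four (hp : ![x, y, z, t, u, v, w, s] ≠ 0)
    (h : ∀ i, eval ![x, y, z, t, u, v, w, s] (eqns24097 i) = 0) :
    (jacobianAt ![x, y, z, t, u, v, w, s] eqns24097).rank ≤ 4 := by
  have hN := five_le_rank_syzygyMatrix (exists_ne_zero_of_eval_eqns_eq_zero hp h)
  have hle := rank_map_eval_add_rank_jacobianAt_le syzygyMatrix_mulVec_eqns h
  rw [map_syzygyMatrix, Fintype.card_fin] at hle
  simp only [eval_X] at hle
  change (syzygyMatrix x y z t u v w s).rank + _ ≤ 9 at hle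
  lia

end Jacobian

/-- At every nonzero point `p ∈ ℂ⁸` where all nine polynomials vanish, the
`9×8` Jacobian matrix of the nine polynomials has rank 4.  Hence the
codimension-4 Fano 3-fold `X ⊂ ℙ(1⁶,2²)` they define is quasismooth. -/
theorem X24097_quasismooth (p : Fin 8 → ℂ) (hp : p ≠ 0)
    (h : ∀ i : Fin 9, eval p (eqns24097 i) = 0) :
    (Matrix.of fun (i : Fin 9) (j : Fin 8) =>
      eval p (pderiv j (eqns24097 i))).rank = 4 := by
  obtain ⟨x, y, z, t, u, v, w, s, rfl⟩ : ∃ x y z t u v w s, p = ![x, y, z, t, u, v, w, s] :=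
    ⟨p 0, p 1, p 2, p 3, p 4, p 5, p 6, p 7, by ext i; fin_cases i <;> rfl⟩
  exact (rank_jacobianAt_eqns_le_four hp h).antisymm (four_le_rank_jacobianAt_eqns hp h)
end
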